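/- Let G be a group, H a subgroup of G, and Γ = G *_H G the amalgamated free product of two copies of G along the identity map of H, with the two canonical homomorphisms ι₁, ι₂ : G → Γ. Then for every g ∈ G, the elements ι₁(g) and ι₂(g) are conjugate in Γ if and only if g is conjugate in G to some element of H. -/

import Mathlib

open Classical in
noncomputable def shiftFun {G : Type*} [Group G] (H : Subgroup G) :
    Option (Σ _ : ℕ, G ⧸ H) → (Σ _ : ℕ, G ⧸ H)
  | none => ⟨0, ((1 : G) : G ⧸ H)⟩
  | some ⟨n, x⟩ => if x = ((1 : G) : G ⧸ H) then ⟨n + 1, x⟩ else ⟨n, x⟩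

theorem shiftFun_bij {G : Type*} [Group G] (H : Subgroup G) :
    Function.Bijective (shiftFun H) := by
  constructor
  · rintro (_ | ⟨n, x⟩) (_ | ⟨m, y⟩) h
    · rfl
    · simp only [shiftFun] at h
      split_ifs at h <;> simp_all
    · simp only [shiftFun] at h
      split_ifs at h <;> simp_all
    · simp only [shiftFun] at h
      split_ifs at h <;> simp_all
  · rintro ⟨n, x⟩
    by_cases hx : x = ((1 : G) : G ⧸ H)
    · cases n with
      | zero => exact ⟨none, by simp [shiftFun, hx]⟩
      | succ n => exact ⟨some ⟨n, x⟩, by simp [shiftFun, hx]⟩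
    · exact ⟨some ⟨n, x⟩, by simp [shiftFun, hx]⟩

theorem shiftFun_smul {G : Type*} [Group G] (H : Subgroup G) (h : G) (hh : h ∈ H)
    (y : Option (Σ _ : ℕ, G ⧸ H)) : shiftFun H (h • y) = h • shiftFun H y := by
  have h1 : h • ((1 : G) : G ⧸ H) = ((1 : G) : G ⧸ H) := by
    rw [MulAction.Quotient.smul_coe, smul_eq_mul, QuotientGroup.eq]
    simpa using hh
  rcases y with _ | ⟨n, x⟩
  · change (⟨0, _⟩ : Σ _ : ℕ, G ⧸ H) = ⟨0, h • ((1 : G) : G ⧸ H)⟩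
    rw [h1]
  · change shiftFun H (some ⟨n, h • x⟩) = _
    have h2 : h • x = ((1 : G) : G ⧸ H) ↔ x = ((1 : G) : G ⧸ H) := by
      constructor
      · intro hx
        rw [← h1] at hx
        exact smul_left_cancel h hx
      · rintro rfl
        exact h1
    by_cases hx : x = ((1 : G) : G ⧸ H)
    · simp [shiftFun, hx, h1, Sigma.smul_mk]
    · simp [shiftFun, hx, h2, Sigma.smul_mk]

/-- In the double `Γ = G *_H G` (the amalgamated free product of two copies of `G`
along the identity of `H`), the images of `g ∈ G` under the two canonical maps are
conjugate in `Γ` iff `g` is conjugate in `G` to an element of `H`. -/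
theorem stmt_15 (G : Type*) [Group G] (H : Subgroup G) (g : G) :
    (∃ z : Monoid.PushoutI (fun _ : Bool => H.subtype),
        Monoid.PushoutI.of (φ := fun _ : Bool => H.subtype) true g =
          z * Monoid.PushoutI.of (φ := fun _ : Bool => H.subtype) false g * z⁻¹) ↔
      ∃ h ∈ H, ∃ z : G, g = z * h * z⁻¹ := by
  constructor
  · rintro ⟨z, hz⟩
    let e := Equiv.ofBijective _ (shiftFun_bij H)
    let f₁ : G →* Equiv.Perm (Σ _ : ℕ, G ⧸ H) := MulAction.toPermHom G _
    let f₂ : G →* Equiv.Perm (Σ _ : ℕ, G ⧸ H) :=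
      (e.permCongrHom : _ →* _).comp (MulAction.toPermHom G (Option (Σ _ : ℕ, G ⧸ H)))
    have h₁ : ∀ a y, f₁ a y = a • y := fun _ _ => rfl
    have h₂ : ∀ a y, f₂ a (e y) = e (a • y) := by
      intro a y
      change e (a • e.symm (e y)) = _
      rw [e.symm_apply_apply]
    let F := Monoid.PushoutI.lift (φ := fun _ : Bool => H.subtype)
      (fun b => if b then f₁ else f₂) (f₁.comp H.subtype) (by
        rintro (_ | _)
        · ext1 a
          ext1 y
          obtain ⟨y, rfl⟩ := e.surjective y
          change f₂ a (e y) = f₁ a (e y)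
          rw [h₁, h₂]
          exact shiftFun_smul H a a.2 y
        · rfl)
    have hF := congrArg F hz
    rw [map_mul, map_mul, map_inv] at hF
    simp only [F, Monoid.PushoutI.lift_of] at hF
    change f₁ g = F z * f₂ g * (F z)⁻¹ at hF
    have h3 : f₁ g (F z (e none)) = F z (e none) := by
      rw [hF]
      change F z (f₂ g ((F z).symm (F z (e none)))) = _
      rw [Equiv.symm_apply_apply, h₂]
      rfl
    rw [h₁] at h3
    generalize F z (e none) = y at h3
    obtain ⟨n, x⟩ := y
    obtain ⟨x, rfl⟩ := QuotientGroup.mk_surjective x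
    have h4 : ((g * x : G) : G ⧸ H) = (x : G ⧸ H) := by
      simpa [Sigma.smul_mk] using h3
    have h5 := QuotientGroup.eq.1 h4.symm
    exact ⟨_, h5, x, by group⟩
  · rintro ⟨h, hh, z, rfl⟩
    refine ⟨Monoid.PushoutI.of (φ := fun _ : Bool => H.subtype) true z *
      (Monoid.PushoutI.of (φ := fun _ : Bool => H.subtype) false z)⁻¹, ?_⟩
    have h1 := Monoid.PushoutI.of_apply_eq_base (fun _ : Bool => H.subtype) true ⟨h, hh⟩
    have h2 := Monoid.PushoutI.of_apply_eq_base (fun _ : Bool => H.subtype) false ⟨h, hh⟩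
    simp only [Subgroup.subtype_apply] at h1 h2
    simp only [map_mul, map_inv, h1, h2]
    group
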